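/- Let k > 470, n ≥ k+1, and suppose L_n^{(k)} = a·(10^{d1}−1)/9 + (b−a)·10^{d2} with integers 0 ≤ d2 < d1, d1 ≥ 3, 1 ≤ a ≤ 9, 0 ≤ b ≤ 9, and n < 2^{k/2}. Then |27·2^{n−2}·10^{−d1}/a − 1| < 2^{−λ}, where λ = min{ k/2 − 5 , (d1 − d2)·(log 10/log 2) − 8 }. -/

import Mathlib

/-- Shifted `k`-generalized Lucas sequence: `genLucas k m` equals `L^{(k)}_{m - (k-2)}`,
so that index `m = 0` corresponds to `n = 2 - k`.  The initial values are
`L^{(k)}_{2-k} = ⋯ = L^{(k)}_{-1} = 0`, `L^{(k)}_0 = 2`, `L^{(k)}_1 = 1`, and each term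
afterwards is the sum of the `k` preceding terms. -/
def genLucas (k : ℕ) : ℕ → ℤ := fun m =>
  if h1 : m < k - 2 then 0
  else if h2 : m = k - 2 then 2
  else if h3 : m = k - 1 then 1
  else ∑ i ∈ Finset.range k, genLucas k (m - 1 - i)
decreasing_by omega

/-- The `k`-generalized Lucas number `L^{(k)}_n` for `n ≥ 0`. -/
def lucasL (k n : ℕ) : ℤ := genLucas k (n + k - 2)

lemma gl_rec (k m : ℕ) (hk : 2 ≤ k) (hm : k ≤ m) :
    genLucas k m = ∑ i ∈ Finset.range k, genLucas k (m - 1 - i) := by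
  rw [genLucas, dif_neg (by omega), dif_neg (by omega), dif_neg (by omega)]

lemma gl_zero (k m : ℕ) (hm : m < k - 2) : genLucas k m = 0 := by
  rw [genLucas, dif_pos hm]

lemma gl_two (k : ℕ) : genLucas k (k - 2) = 2 := by
  rw [genLucas, dif_neg (by omega), dif_pos rfl]

lemma gl_one (k : ℕ) (hk : 2 ≤ k) : genLucas k (k - 1) = 1 := by
  rw [genLucas, dif_neg (by omega), dif_neg (by omega), dif_pos rfl]

lemma gl_step (k j : ℕ) (hk : 2 ≤ k) :
    genLucas k (k + (j + 1)) = 2 * genLucas k (k + j) - genLucas k j := by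
  have h1 := gl_rec k (k + (j + 1)) hk (by omega)
  have h2 := gl_rec k (k + j) hk (by omega)
  have h3 := Finset.sum_range_succ (fun i => genLucas k (k + j - i)) k
  rw [Finset.sum_range_succ'] at h3
  have e1 : ∀ i, k + (j + 1) - 1 - i = k + j - i := by intro i; omega
  have e2 : ∀ i, k + j - 1 - i = k + j - (i + 1) := by intro i; omega
  simp only [e1] at h1
  simp only [e2] at h2
  have e3 : k + j - k = j := by omega
  simp only [e3, Nat.sub_zero] at h3
  linarith

lemma gl_k (k : ℕ) (hk : 2 ≤ k) : genLucas k k = 3 := by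
  rw [gl_rec k k hk le_rfl, Finset.sum_range_reflect (fun i => genLucas k i)]
  obtain ⟨q, rfl⟩ := Nat.exists_eq_add_of_le' hk
  rw [Finset.sum_range_succ, Finset.sum_range_succ, Finset.sum_eq_zero]
  · have h1 := gl_two (q + 2)
    have h2 := gl_one (q + 2) hk
    simp only [Nat.add_sub_cancel] at h1
    rw [show q + 2 - 1 = q + 1 by omega] at h2
    rw [h1, h2]; norm_num
  · intro i hi
    apply gl_zero
    have := Finset.mem_range.mp hi
    omega

lemma gl_nonneg (k : ℕ) (hk : 2 ≤ k) (m : ℕ) : 0 ≤ genLucas k m := by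
  induction m using Nat.strong_induction_on with
  | _ m ih =>
    by_cases h1 : m < k - 2
    · rw [gl_zero k m h1]
    by_cases h2 : m = k - 2
    · rw [h2, gl_two]; norm_num
    by_cases h3 : m = k - 1
    · rw [h3, gl_one k hk]; norm_num
    rw [gl_rec k m hk (by omega)]
    apply Finset.sum_nonneg
    intro i _
    apply ih
    omega

lemma gl_upper (k j : ℕ) (hk : 2 ≤ k) : genLucas k (k + j) ≤ 3 * 2 ^ j := by
  induction j with
  | zero => simp [gl_k k hk]
  | succ j ih =>
    rw [gl_step k j hk, pow_succ]
    have := gl_nonneg k hk j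
    linarith

lemma gl_upper2 (k m : ℕ) (hk : 2 ≤ k) : genLucas k m * 2 ^ k ≤ 8 * 2 ^ m := by
  by_cases h1 : m < k - 2
  · rw [gl_zero k m h1]; simp
  by_cases h2 : m = k - 2
  · rw [h2, gl_two]
    obtain ⟨q, rfl⟩ := Nat.exists_eq_add_of_le' hk
    simp only [Nat.add_sub_cancel, pow_add]
    have : (0:ℤ) < 2 ^ q := by positivity
    linarith
  by_cases h3 : m = k - 1
  · rw [h3, gl_one k hk]
    obtain ⟨q, rfl⟩ := Nat.exists_eq_add_of_le' hk
    rw [show q + 2 - 1 = q + 1 by omega]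
    simp only [pow_add]
    have : (0:ℤ) < 2 ^ q := by positivity
    linarith
  obtain ⟨j, rfl⟩ := Nat.exists_eq_add_of_le (show k ≤ m by omega)
  have := gl_upper k j hk
  rw [pow_add]
  have h4 : (0:ℤ) < 2 ^ k := by positivity
  have h5 : (0:ℤ) < 2 ^ j := by positivity
  nlinarith [mul_pos h4 h5, mul_le_mul_of_nonneg_right this h4.le]

lemma gl_lower (k j : ℕ) (hk : 2 ≤ k) :
    2 ^ k * (3 * 2 ^ j - genLucas k (k + j)) ≤ 4 * j * 2 ^ j := by
  induction j with
  | zero => simp [gl_k k hk]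
  | succ j ih =>
    rw [gl_step k j hk, pow_succ]
    have := gl_upper2 k j hk
    push_cast
    linarith

lemma final_arith (X u t δ e : ℝ) (hu : 0 < u) (hu1 : u ≤ 1 / 10) (ht : 0 < t)
    (ht1 : t ≤ 1 / 1000) (hδ : 0 ≤ δ) (hδX : δ ≤ X * (4 / 3 * t)) (he : |e| ≤ 73 * u)
    (hX : X - 1 = e + δ) : |X - 1| < 32 * t ∨ |X - 1| < 256 * u := by
  have hX9 : X ≤ 9 := by
    have := le_abs_self e
    by_contra h
    push Not at h
    nlinarith
  have h1 : |X - 1| ≤ 73 * u + 12 * t := by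
    rw [hX]
    calc |e + δ| ≤ |e| + |δ| := abs_add_le _ _
      _ ≤ 73 * u + 12 * t := by
        rw [abs_of_nonneg hδ]
        nlinarith
  by_contra h
  push Not at h
  linarith [h.1, h.2]

/-- For `k > 470` and `n < 2^{k/2}`, the bound `|27·2^{n-2}·10^{-d1}/a - 1| < 2^{-λ}`
holds, where `λ = min(k/2 - 5, (d1-d2)·log 10/log 2 - 8)`. -/
theorem lambda3_bound (k n : ℕ) (hk : 470 < k) (hnk : k + 1 ≤ n)
    (d1 d2 : ℕ) (a b : ℤ) (hd : d2 < d1) (hd1 : 3 ≤ d1)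
    (ha1 : 1 ≤ a) (ha9 : a ≤ 9) (hb0 : 0 ≤ b) (hb9 : b ≤ 9)
    (heq : lucasL k n = a * ((10 ^ d1 - 1) / 9) + (b - a) * 10 ^ d2)
    (hn2k : (n : ℝ) < (2 : ℝ) ^ ((k : ℝ) / 2)) :
    |27 * (2 : ℝ) ^ (n - 2) / 10 ^ d1 / (a : ℝ) - 1|
      < (2 : ℝ) ^ (-(min ((k : ℝ) / 2 - 5)
          (((d1 : ℝ) - (d2 : ℝ)) * (Real.log 10 / Real.log 2) - 8))) := by

  obtain ⟨j, rfl⟩ := Nat.exists_eq_add_of_le' (show 2 ≤ n by omega)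
  have hk2 : 2 ≤ k := by omega
  have hL : lucasL k (j + 2) = genLucas k (k + j) := by
    unfold lucasL
    congr 1
    omega
  rw [hL] at heq
  have hup := gl_upper k j hk2
  have hlo := gl_lower k j hk2
  have h9 : (10 ^ d1 - 1 : ℤ) / 9 * 9 = 10 ^ d1 - 1 := by
    apply Int.ediv_mul_cancel
    have := sub_dvd_pow_sub_pow (10 : ℤ) 1 d1
    simpa using this
  set g := genLucas k (k + j) with hg
  have hgz : 9 * g = a * (10 ^ d1 - 1) + 9 * (b - a) * 10 ^ d2 := by
    linear_combination 9 * heq + a * h9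
  have hgr : 9 * (g : ℝ) = a * (10 ^ d1 - 1) + 9 * (b - a) * 10 ^ d2 := by
    exact_mod_cast hgz
  have hupr : (g : ℝ) ≤ 3 * 2 ^ j := by exact_mod_cast hup
  have hlor : (2 : ℝ) ^ k * (3 * 2 ^ j - g) ≤ 4 * j * 2 ^ j := by exact_mod_cast hlo
  have ha1r : (1 : ℝ) ≤ a := by exact_mod_cast ha1
  have ha0 : (0 : ℝ) < a := by linarith
  -- t
  obtain ⟨s, hs⟩ : ∃ s : ℝ, s = (2 : ℝ) ^ ((k : ℝ) / 2) := ⟨_, rfl⟩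
  have hs0 : 0 < s := by rw [hs]; positivity
  have hss : s * s = 2 ^ k := by
    rw [hs, ← Real.rpow_add (by norm_num), add_halves, Real.rpow_natCast]
  have hs1000 : 1000 ≤ s := by
    rw [hs]
    calc (1000 : ℝ) ≤ (2 : ℝ) ^ (10 : ℝ) := by
          rw [show (10 : ℝ) = ((10 : ℕ) : ℝ) by norm_num, Real.rpow_natCast]; norm_num
      _ ≤ _ := by
          apply Real.rpow_le_rpow_of_exponent_le (by norm_num)
          have : (470 : ℝ) < k := by exact_mod_cast hk
          linarith
  rw [← hs] at hn2k
  push_cast at hn2k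
  -- u
  obtain ⟨c, rfl⟩ := Nat.exists_eq_add_of_lt hd
  have hP : (0 : ℝ) < 10 ^ d2 := by positivity
  have hP1 : (1 : ℝ) ≤ 10 ^ d2 := one_le_pow₀ (by norm_num)
  have hQ : (0 : ℝ) < 10 ^ (c + 1) := by positivity
  have hQ1 : (10 : ℝ) ≤ 10 ^ (c + 1) := by
    rw [pow_succ]
    have : (1 : ℝ) ≤ 10 ^ c := one_le_pow₀ (by norm_num)
    linarith
  have hPQ : (10 : ℝ) ^ (d2 + c + 1) = 10 ^ d2 * 10 ^ (c + 1) := by rw [← pow_add]; congr 1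
  rw [hPQ] at hgr ⊢
  have e1 : (2 : ℝ) ^ (-((k : ℝ) / 2 - 5)) = 32 * s⁻¹ := by
    rw [hs, ← Real.rpow_neg (by norm_num), neg_sub, sub_eq_add_neg,
      Real.rpow_add (by norm_num), show (5 : ℝ) = ((5 : ℕ) : ℝ) by norm_num, Real.rpow_natCast]
    norm_num
  have e2 : (2 : ℝ) ^ (-((((d2 + c + 1 : ℕ) : ℝ) - (d2 : ℝ)) * (Real.log 10 / Real.log 2) - 8))
      = 256 * ((10 : ℝ) ^ (c + 1))⁻¹ := by
    have hd : ((d2 + c + 1 : ℕ) : ℝ) - (d2 : ℝ) = ((c + 1 : ℕ) : ℝ) := by push_cast; ring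
    rw [hd, neg_sub, sub_eq_add_neg, Real.rpow_add (by norm_num), Real.rpow_neg (by norm_num),
      show (8 : ℝ) = ((8 : ℕ) : ℝ) by norm_num, Real.rpow_natCast, mul_comm ((c + 1 : ℕ) : ℝ),
      Real.rpow_mul (by norm_num), Real.rpow_natCast]
    have h2 : (2 : ℝ) ^ (Real.log 10 / Real.log 2) = 10 := by
      exact Real.rpow_logb (by norm_num) (by norm_num) (by norm_num)
    rw [h2]; norm_num
  have key : |27 * (2 : ℝ) ^ (j + 2 - 2) / (10 ^ d2 * 10 ^ (c + 1)) / (a : ℝ) - 1| < 32 * s⁻¹ ∨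
      |27 * (2 : ℝ) ^ (j + 2 - 2) / (10 ^ d2 * 10 ^ (c + 1)) / (a : ℝ) - 1|
        < 256 * ((10 : ℝ) ^ (c + 1))⁻¹ := by
    rw [Nat.add_sub_cancel]
    clear e1 e2 hPQ
    generalize (10 : ℝ) ^ d2 = P at *
    generalize (10 : ℝ) ^ (c + 1) = Q at *
    have hW : (0 : ℝ) < 2 ^ j := by positivity
    rw [← hss] at hlor
    generalize (2 : ℝ) ^ j = W at *
    apply final_arith _ _ _ (9 * (3 * W - g) / (a * (P * Q)))
      ((-a + 9 * (b - a) * P) / (a * (P * Q)))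
    · positivity
    · rw [one_div]; exact inv_anti₀ (by norm_num) hQ1
    · positivity
    · rw [one_div]; exact inv_anti₀ (by norm_num) hs1000
    · apply div_nonneg _ (by positivity)
      linarith
    · have hD : 3 * W - g ≤ 4 * W * s⁻¹ := by
        rw [← div_eq_mul_inv, le_div_iff₀ hs0]
        have : (s * s) * (3 * W - g) ≤ s * (4 * W) := by nlinarith
        have h3 : s * ((3 * W - g) * s) ≤ s * (4 * W) := by linarith
        exact le_of_mul_le_mul_left h3 hs0
      rw [show 27 * W / (P * Q) / (a : ℝ) * (4 / 3 * s⁻¹) = 9 * (4 * W * s⁻¹) / (a * (P * Q)) by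
        field_simp; norm_num]
      gcongr
    · rw [abs_div, abs_of_pos (show (0 : ℝ) < a * (P * Q) by positivity),
        div_le_iff₀ (by positivity),
        show 73 * Q⁻¹ * (a * (P * Q)) = 73 * (a * P) by field_simp]
      have hba : |((b : ℝ) - a)| ≤ 8 * a := by
        have hb0r : (0 : ℝ) ≤ b := by exact_mod_cast hb0
        have hb9r : (b : ℝ) ≤ 9 := by exact_mod_cast hb9
        rw [abs_le]; constructor <;> linarith
      calc |-(a : ℝ) + 9 * (b - a) * P| ≤ |-(a : ℝ)| + |9 * (b - a) * P| := abs_add_le _ _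
        _ = a + 9 * |(b : ℝ) - a| * P := by
            rw [abs_neg, abs_of_pos ha0, abs_mul, abs_mul, abs_of_pos hP]; norm_num
        _ ≤ a * P + 9 * (8 * a) * P := by
            gcongr
            nlinarith
        _ = 73 * (a * P) := by ring
    · field_simp
      linarith
  rcases key with h | h
  · rw [← e1] at h
    refine h.trans_le (Real.rpow_le_rpow_of_exponent_le (by norm_num) ?_)
    exact neg_le_neg (min_le_left _ _)
  · rw [← e2] at h
    refine h.trans_le (Real.rpow_le_rpow_of_exponent_le (by norm_num) ?_)
    exact neg_le_neg (min_le_right _ _)
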